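/- The abelianizing filtration of A(1) is finer than the May filtration: for every natural number n, the n-th power Iⁿ of the augmentation ideal I = (Sq1, Sq2) of A(1) is contained in the n-th layer Fⁿ of the abelianizing filtration, where F⁰ = A(1), F¹ = (Sq1, Sq2), F² = (Sq2), F³ = (Sq1·Sq2, Sq2·Sq1), F⁴ = (Q₀), F⁵ = (Sq1·Q₀, Sq2·Q₀), F⁶ = (Sq2·Q₀), F⁷ = (Sq1·Sq2·Q₀), and Fⁿ = 0 for n ≥ 8. -/

import Mathlib

/-- The relations defining `A(1)`: `Sq¹·Sq¹ = 0` and `Sq²·Sq² + Sq¹·Sq²·Sq¹ = 0`. -/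
inductive A1Rel : FreeAlgebra (ZMod 2) (Fin 2) → FreeAlgebra (ZMod 2) (Fin 2) → Prop
  | sq1 : A1Rel (FreeAlgebra.ι (ZMod 2) 0 * FreeAlgebra.ι (ZMod 2) 0) 0
  | sq2 : A1Rel (FreeAlgebra.ι (ZMod 2) 1 * FreeAlgebra.ι (ZMod 2) 1 +
      FreeAlgebra.ι (ZMod 2) 0 * FreeAlgebra.ι (ZMod 2) 1 * FreeAlgebra.ι (ZMod 2) 0) 0

/-- `A(1)`, the subalgebra of the mod 2 Steenrod algebra generated by `Sq¹` and `Sq²`, presented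
as the quotient of the free `F₂`-algebra on two generators `Sq1, Sq2` by the two-sided ideal
generated by `Sq1·Sq1` and `Sq2·Sq2 + Sq1·Sq2·Sq1`. -/
abbrev A1 : Type := RingQuot A1Rel

/-- The image of `Sq¹` in `A(1)`. -/
noncomputable def Sq1 : A1 := RingQuot.mkAlgHom (ZMod 2) A1Rel (FreeAlgebra.ι (ZMod 2) 0)

/-- The image of `Sq²` in `A(1)`. -/
noncomputable def Sq2 : A1 := RingQuot.mkAlgHom (ZMod 2) A1Rel (FreeAlgebra.ι (ZMod 2) 1)

/-- Milnor's element `Q₀ = Sq¹·Sq² + Sq²·Sq¹` in `A(1)`. -/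
noncomputable def Q0 : A1 := Sq1 * Sq2 + Sq2 * Sq1

/-- The abelianizing filtration of `A(1)`, a decreasing filtration by two-sided ideals. -/
noncomputable def abFilt : ℕ → TwoSidedIdeal A1
  | 0 => ⊤
  | 1 => TwoSidedIdeal.span {Sq1, Sq2}
  | 2 => TwoSidedIdeal.span {Sq2}
  | 3 => TwoSidedIdeal.span {Sq1 * Sq2, Sq2 * Sq1}
  | 4 => TwoSidedIdeal.span {Q0}
  | 5 => TwoSidedIdeal.span {Sq1 * Q0, Sq2 * Q0}
  | 6 => TwoSidedIdeal.span {Sq2 * Q0}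
  | 7 => TwoSidedIdeal.span {Sq1 * Sq2 * Q0}
  | _ + 8 => ⊥

/-! A word of length `n` in two elements `a`, `b` with `a² = 0` and `b² = aba` reduces to `0` or to
an alternating word of length at least `n`, and `abab` is the longest alternating word that need
not vanish. Since a set of algebra generators generates the same left and two-sided ideal, `Iⁿ` is
the left ideal generated by the words of length `n` in `Sq1`, `Sq2`, so it is enough to find `ab`,
`ba`, `aba` in `F²`, then `aba`, `bab`, `abab` in `F³`, and `abab = ab · Q₀` in `F⁴`. -/

section Words

open scoped Pointwise

theorem isTwoSided_span_of_adjoin_eq_top {R A : Type*} [CommSemiring R] [Semiring A] [Algebra R A]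
    {s : Set A} (hs : Algebra.adjoin R s = ⊤) : (Ideal.span s).IsTwoSided := by
  suffices h : ∀ y : A, ∀ x ∈ Ideal.span s, x * y ∈ Ideal.span s from ⟨fun y hx ↦ h y _ hx⟩
  intro y
  have hy : y ∈ Algebra.adjoin R s := hs ▸ Algebra.mem_top
  induction hy using Algebra.adjoin_induction with
  | mem y hy => exact fun x _ ↦ Ideal.mul_mem_left _ x (Ideal.subset_span hy)
  | algebraMap r =>
    intro x hx
    rw [← Algebra.commutes]
    exact Ideal.mul_mem_left _ _ hx
  | add y z _ _ hy hz =>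
    intro x hx
    rw [mul_add]
    exact add_mem (hy x hx) (hz x hx)
  | mul y z _ _ hy hz =>
    intro x hx
    rw [← mul_assoc]
    exact hz _ (hy x hx)

theorem asIdeal_span_eq_span {A : Type*} [Ring A] (s : Set A) [(Ideal.span s).IsTwoSided] :
    (TwoSidedIdeal.span s).asIdeal = Ideal.span s := by
  apply le_antisymm
  · have h : TwoSidedIdeal.span s ≤ (Ideal.span s).toTwoSided := by
      rw [TwoSidedIdeal.span_le, Ideal.coe_toTwoSided]
      exact Ideal.subset_span
    simpa only [Ideal.asIdeal_toTwoSided] using TwoSidedIdeal.asIdeal.monotone h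
  · exact Ideal.span_le.2 TwoSidedIdeal.subset_span

theorem span_pow_eq_span_pow {A : Type*} [Semiring A] (s : Set A) [(Ideal.span s).IsTwoSided]
    (n : ℕ) : Ideal.span s ^ n = Ideal.span (s ^ n) := by
  induction n with
  | zero => rw [Submodule.pow_zero, pow_zero, Ideal.one_eq_top, ← Set.singleton_one,
      Ideal.span_singleton_one]
  | succ n ih =>
    obtain rfl | hn := eq_or_ne n 0
    · rw [zero_add, Submodule.pow_one, pow_one]
    · rw [Submodule.pow_succ' _ hn, ih, Ideal.span_mul_span', pow_succ']

theorem asIdeal_span_pow_le_iff {R A : Type*} [CommSemiring R] [Ring A] [Algebra R A] {s : Set A}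
    (hs : Algebra.adjoin R s = ⊤) (J : TwoSidedIdeal A) (n : ℕ) :
    (TwoSidedIdeal.span s).asIdeal ^ n ≤ J.asIdeal ↔ s ^ n ⊆ J := by
  have := isTwoSided_span_of_adjoin_eq_top hs
  rw [asIdeal_span_eq_span, span_pow_eq_span_pow, Ideal.span_le, TwoSidedIdeal.coe_asIdeal]

theorem pair_mul_subset_iff {M : Type*} [Mul M] {a b : M} {t u : Set M} :
    {a, b} * t ⊆ u ↔ ∀ x ∈ t, a * x ∈ u ∧ b * x ∈ u := by
  simp only [Set.mul_subset_iff, Set.mem_insert_iff, Set.mem_singleton_iff, forall_eq_or_imp,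
    forall_eq, forall_and]

section MonoidWithZero

variable {M : Type*} [MonoidWithZero M] {a b : M}

theorem baba_eq_abab (hb : b * b = a * b * a) : b * a * b * a = a * b * a * b :=
  calc b * a * b * a = b * (a * b * a) := by simp only [mul_assoc]
    _ = b * b * b := by rw [← hb, mul_assoc]
    _ = a * b * a * b := by rw [hb]

theorem bba_eq_zero (ha : a * a = 0) (hb : b * b = a * b * a) : b * b * a = 0 := by
  rw [hb, mul_assoc, ha, mul_zero]

theorem babab_eq_zero (ha : a * a = 0) (hb : b * b = a * b * a) : b * a * b * a * b = 0 :=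
  calc b * a * b * a * b = a * b * a * b * b := by rw [baba_eq_abab hb]
    _ = a * b * a * (a * b * a) := by rw [mul_assoc _ b b, hb]
    _ = a * b * (a * a) * b * a := by simp only [mul_assoc]
    _ = 0 := by simp only [ha, mul_zero, zero_mul]

theorem pair_pow_two_subset (ha : a * a = 0) (hb : b * b = a * b * a) :
    ({a, b} : Set M) ^ 2 ⊆ {0, a * b, b * a, a * b * a} := by
  rw [pow_two, pair_mul_subset_iff]
  rintro x (rfl | rfl)
  · simp [ha]
  · simp [hb]

theorem pair_pow_three_subset (ha : a * a = 0) (hb : b * b = a * b * a) :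
    ({a, b} : Set M) ^ 3 ⊆ {0, a * b * a, b * a * b, a * b * a * b} := by
  rw [pow_succ']
  refine (Set.mul_subset_mul_left (pair_pow_two_subset ha hb)).trans (pair_mul_subset_iff.2 ?_)
  rintro x (rfl | rfl | rfl | rfl)
  · simp
  · simp [← mul_assoc, ha]
  · simp [← mul_assoc, bba_eq_zero ha hb]
  · simp [← mul_assoc, ha, baba_eq_abab hb]

theorem pair_pow_four_subset (ha : a * a = 0) (hb : b * b = a * b * a) :
    ({a, b} : Set M) ^ 4 ⊆ {0, a * b * a * b} := by
  rw [pow_succ']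
  refine (Set.mul_subset_mul_left (pair_pow_three_subset ha hb)).trans (pair_mul_subset_iff.2 ?_)
  rintro x (rfl | rfl | rfl | rfl)
  · simp
  · simp [← mul_assoc, ha, baba_eq_abab hb]
  · simp [← mul_assoc, bba_eq_zero ha hb]
  · simp [← mul_assoc, ha, babab_eq_zero ha hb]

theorem pair_pow_add_five_subset_zero (ha : a * a = 0) (hb : b * b = a * b * a) (n : ℕ) :
    ({a, b} : Set M) ^ (n + 5) ⊆ {0} := by
  induction n with
  | zero =>
    rw [zero_add, pow_succ']
    refine (Set.mul_subset_mul_left (pair_pow_four_subset ha hb)).trans (pair_mul_subset_iff.2 ?_)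
    rintro x (rfl | rfl)
    · simp
    · simp [← mul_assoc, ha, babab_eq_zero ha hb]
  | succ n ih =>
    rw [Nat.add_right_comm, pow_succ']
    refine (Set.mul_subset_mul_left ih).trans (pair_mul_subset_iff.2 ?_)
    simp

end MonoidWithZero

section Ring

variable {R : Type*} [Ring R] {a b : R}

theorem pair_pow_two_subset_span (ha : a * a = 0) (hb : b * b = a * b * a) :
    ({a, b} : Set R) ^ 2 ⊆ TwoSidedIdeal.span {b} := by
  have h : b ∈ TwoSidedIdeal.span {b} := TwoSidedIdeal.subset_span rfl
  have hab : a * b ∈ TwoSidedIdeal.span {b} := TwoSidedIdeal.mul_mem_left _ _ _ h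
  refine (pair_pow_two_subset ha hb).trans ?_
  rintro x (rfl | rfl | rfl | rfl)
  · exact zero_mem _
  · exact hab
  · exact TwoSidedIdeal.mul_mem_right _ _ _ h
  · exact TwoSidedIdeal.mul_mem_right _ _ _ hab

theorem pair_pow_three_subset_span (ha : a * a = 0) (hb : b * b = a * b * a) :
    ({a, b} : Set R) ^ 3 ⊆ TwoSidedIdeal.span {a * b, b * a} := by
  have hab : a * b ∈ TwoSidedIdeal.span {a * b, b * a} := TwoSidedIdeal.subset_span (.inl rfl)
  have hba : b * a ∈ TwoSidedIdeal.span {a * b, b * a} := TwoSidedIdeal.subset_span (.inr rfl)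
  have haba : a * b * a ∈ TwoSidedIdeal.span {a * b, b * a} :=
    TwoSidedIdeal.mul_mem_right _ _ _ hab
  refine (pair_pow_three_subset ha hb).trans ?_
  rintro x (rfl | rfl | rfl | rfl)
  · exact zero_mem _
  · exact haba
  · exact TwoSidedIdeal.mul_mem_right _ _ _ hba
  · exact TwoSidedIdeal.mul_mem_right _ _ _ haba

theorem pair_pow_four_subset_span (ha : a * a = 0) (hb : b * b = a * b * a) :
    ({a, b} : Set R) ^ 4 ⊆ TwoSidedIdeal.span {a * b + b * a} := by
  have h_abab : a * b * a * b = a * b * (a * b + b * a) :=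
    calc a * b * a * b = a * b * a * b + a * (b * b * a) := by
          rw [bba_eq_zero ha hb, mul_zero, add_zero]
      _ = a * b * (a * b + b * a) := by noncomm_ring
  refine (pair_pow_four_subset ha hb).trans ?_
  rintro x (rfl | rfl)
  · exact zero_mem _
  · rw [h_abab]
    exact TwoSidedIdeal.mul_mem_left _ _ _ (TwoSidedIdeal.subset_span rfl)

end Ring

end Words

namespace A1

theorem Sq1_mul_Sq1 : Sq1 * Sq1 = 0 := by
  simpa only [Sq1, map_mul, map_zero] using RingQuot.mkAlgHom_rel (ZMod 2) A1Rel.sq1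

theorem Sq2_mul_Sq2 : Sq2 * Sq2 = Sq1 * Sq2 * Sq1 := by
  have h : Sq2 * Sq2 + Sq1 * Sq2 * Sq1 = 0 := by
    simpa only [Sq1, Sq2, map_add, map_mul, map_zero] using
      RingQuot.mkAlgHom_rel (ZMod 2) A1Rel.sq2
  rw [eq_neg_of_add_eq_zero_left h, ZModModule.neg_eq_self]

theorem adjoin_Sq1_Sq2 : Algebra.adjoin (ZMod 2) {Sq1, Sq2} = ⊤ := by
  have h : {Sq1, Sq2} =
      RingQuot.mkAlgHom (ZMod 2) A1Rel '' Set.range (FreeAlgebra.ι (ZMod 2)) := by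
    ext x
    simp [Sq1, Sq2, Fin.exists_fin_two, eq_comm]
  rw [h, Algebra.adjoin_image, FreeAlgebra.adjoin_range_ι, Algebra.map_top,
    AlgHom.range_eq_top]
  exact RingQuot.mkAlgHom_surjective (ZMod 2) A1Rel

end A1

/-- The abelianizing filtration of `A(1)` is finer than the May filtration: for every `n`,
the `n`-th power of the augmentation ideal `I = (Sq1, Sq2)` is contained in the `n`-th layer
of the abelianizing filtration. -/
theorem mayFilt_le_abFilt (n : ℕ) :
    ((TwoSidedIdeal.span {Sq1, Sq2} : TwoSidedIdeal A1).asIdeal) ^ n ≤ (abFilt n).asIdeal := by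
  have of_words := (asIdeal_span_pow_le_iff A1.adjoin_Sq1_Sq2 (abFilt n) n).2
  match n with
  | 0 => exact le_top
  | 1 => exact (Submodule.pow_one _).le
  | 2 => exact of_words (pair_pow_two_subset_span A1.Sq1_mul_Sq1 A1.Sq2_mul_Sq2)
  | 3 => exact of_words (pair_pow_three_subset_span A1.Sq1_mul_Sq1 A1.Sq2_mul_Sq2)
  | 4 => exact of_words (pair_pow_four_subset_span A1.Sq1_mul_Sq1 A1.Sq2_mul_Sq2)
  | m + 5 =>
    exact of_words ((pair_pow_add_five_subset_zero A1.Sq1_mul_Sq1 A1.Sq2_mul_Sq2 m).trans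
      (Set.singleton_subset_iff.2 (zero_mem _)))
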